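/- (Theorem 1, disturbance-free case.) Let N ≥ 1, h > 0, κ > 1, let M, D₂, LC̄₃, LD₄, LD₅ be real N×N matrices, and let P, Q be real symmetric positive definite N×N matrices with MᵀP + PM = −Q. Define c₈ = √(κ·λ_max(P)/λ_min(P)) and c₉ = λ_min(Q) − ‖2PLC̄₃‖·c₈ − ( ‖2PD₂‖ + ‖PLD₅‖ + (‖2PD₂‖ + ‖2PLD₄‖)·c₈ + ‖PLD₅‖·c₈ )/h, and assume c₉ > 0. Let e : ℝ → ℝ^N be differentiable and satisfy, for all t ≥ 0, e'(t) = M·e(t) + (1/h)·D₂·(e(t) − e(t−h)) + LC̄₃·e(t−h) + (1/h)·LD₄·e(t−h) − (1/(2h))·LD₅·(e(t) + e(t−2h)), together with the Razumikhin condition e(t+θ)ᵀP e(t+θ) ≤ κ·e(t)ᵀP e(t) for all t ≥ 0 and all θ ∈ [−2h, 0]. Then for every t ≥ 0, ‖e(t)‖ ≤ √(λ_max(P)/λ_min(P)) · ‖e(0)‖ · exp( −c₉·t / (2·λ_max(P)) ). -/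

import Mathlib

open Matrix

/-- The operator norm of a square real matrix induced by the Euclidean norm. -/
noncomputable def l2OpNorm {N : ℕ} (M : Matrix (Fin N) (Fin N) ℝ) : ℝ :=
  ‖Matrix.toEuclideanCLM (𝕜 := ℝ) M‖

/-!
The quadratic form `V(x) = ⟪x, P x⟫` is a Lyapunov function. The Razumikhin condition bounds the
delayed errors `‖e(t - h)‖` and `‖e(t - 2h)‖` by `c₈ ‖e(t)‖`, so Cauchy–Schwarz on each delayed
term leaves `V' ≤ -c₉ ‖e‖² ≤ -(c₉ / λ_max(P)) V` along the error dynamics. Grönwall's inequality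
then gives exponential decay of `V`, hence of `‖e‖` at half that rate.
-/

open scoped InnerProductSpace

section Lyapunov

theorem le_mul_exp_of_deriv_right_le {f f' : ℝ → ℝ} {K a : ℝ}
    (hf : ContinuousOn f (Set.Ici a))
    (hf' : ∀ t, a ≤ t → HasDerivWithinAt f (f' t) (Set.Ici t) t)
    (bound : ∀ t, a ≤ t → f' t ≤ K * f t) {t : ℝ} (ht : a ≤ t) :
    f t ≤ f a * Real.exp (K * (t - a)) := by
  rw [← gronwallBound_ε0]
  exact le_gronwallBound_of_liminf_deriv_right_le (hf.mono Set.Icc_subset_Ici_self)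
    (fun s hs _ hr => (hf' s hs.1).liminf_right_slope_le hr) le_rfl
    (fun s hs => (bound s hs.1).trans_eq (add_zero _).symm) t ⟨ht, le_rfl⟩

variable {E : Type*} [SeminormedAddGroup E] {V : E → ℝ} {α β : ℝ}

theorem norm_le_sqrt_mul_norm_of_le_mul {κ : ℝ} {x y : E} (hα : 0 < α) (hκ : 0 ≤ κ)
    (hlower : α * ‖y‖ ^ 2 ≤ V y) (hupper : V x ≤ β * ‖x‖ ^ 2) (hxy : V y ≤ κ * V x) :
    ‖y‖ ≤ √(κ * β / α) * ‖x‖ := by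
  have hsq : ‖y‖ ^ 2 ≤ κ * β / α * ‖x‖ ^ 2 := by
    rw [div_mul_eq_mul_div, le_div_iff₀ hα, mul_comm, mul_assoc]
    exact (hlower.trans hxy).trans (mul_le_mul_of_nonneg_left hupper hκ)
  calc ‖y‖ ≤ √(κ * β / α * ‖x‖ ^ 2) := Real.le_sqrt_of_sq_le hsq
    _ = √(κ * β / α) * ‖x‖ := by
      rw [Real.sqrt_mul' _ (sq_nonneg _), Real.sqrt_sq (norm_nonneg _)]

theorem norm_le_mul_exp_of_lyapunov {c : ℝ} {e : ℝ → E} {V' : ℝ → ℝ}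
    (hα : 0 < α) (hβ : 0 < β) (hc : 0 ≤ c)
    (hlower : ∀ x, α * ‖x‖ ^ 2 ≤ V x) (hupper : ∀ x, V x ≤ β * ‖x‖ ^ 2)
    (hcont : ContinuousOn (fun t => V (e t)) (Set.Ici 0))
    (hderiv : ∀ t, 0 ≤ t → HasDerivWithinAt (fun t => V (e t)) (V' t) (Set.Ici t) t)
    (hdecay : ∀ t, 0 ≤ t → V' t ≤ -c * ‖e t‖ ^ 2) {t : ℝ} (ht : 0 ≤ t) :
    ‖e t‖ ≤ √(β / α) * ‖e 0‖ * Real.exp (-c * t / (2 * β)) := by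
  have hrate : ∀ s, 0 ≤ s → V' s ≤ -(c / β) * V (e s) := fun s hs =>
    calc V' s ≤ -(c / β) * (β * ‖e s‖ ^ 2) := by
          rw [neg_mul, ← mul_assoc, div_mul_cancel₀ _ hβ.ne', ← neg_mul]
          exact hdecay s hs
      _ ≤ -(c / β) * V (e s) :=
          mul_le_mul_of_nonpos_left (hupper _) (neg_nonpos.2 (div_nonneg hc hβ.le))
  have hV : V (e t) ≤ Real.exp (-c * t / (2 * β)) ^ 2 * V (e 0) := by
    have hexp : Real.exp (-(c / β) * (t - 0)) = Real.exp (-c * t / (2 * β)) ^ 2 := by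
      rw [← Real.exp_nat_mul]
      congr 1
      push_cast
      field_simp
      ring
    rw [← hexp, mul_comm]
    exact le_mul_exp_of_deriv_right_le hcont hderiv hrate ht
  have hnorm := norm_le_sqrt_mul_norm_of_le_mul hα (sq_nonneg _) (hlower _) (hupper _) hV
  rwa [mul_div_assoc, Real.sqrt_mul (sq_nonneg _), Real.sqrt_sq (Real.exp_pos _).le,
    mul_assoc, mul_comm] at hnorm

end Lyapunov

section DelayedErrorDynamics

variable {E : Type*} [NormedAddCommGroup E] [InnerProductSpace ℝ E]

theorem hasDerivWithinAt_inner_apply_self {P : E →L[ℝ] E} (hP : (P : E →ₗ[ℝ] E).IsSymmetric)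
    {e : ℝ → E} {e' : E} {s : Set ℝ} {t : ℝ} (he : HasDerivWithinAt e e' s t) :
    HasDerivWithinAt (fun t => ⟪e t, P (e t)⟫_ℝ) (2 * ⟪e t, P e'⟫_ℝ) s t := by
  have hsymm : ⟪e', P (e t)⟫_ℝ = ⟪e t, P e'⟫_ℝ := by
    rw [← hP.apply_clm, real_inner_comm]
  have hinner := he.inner ℝ (P.hasFDerivAt.comp_hasDerivWithinAt t he)
  rwa [Function.comp_apply, hsymm, ← two_mul] at hinner

theorem abs_inner_apply_le_of_norm_le (T : E →L[ℝ] E) {x y : E} {c : ℝ} (hy : ‖y‖ ≤ c * ‖x‖) :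
    |⟪x, T y⟫_ℝ| ≤ ‖T‖ * c * ‖x‖ ^ 2 :=
  calc |⟪x, T y⟫_ℝ| ≤ ‖x‖ * ‖T y‖ := abs_real_inner_le_norm x (T y)
    _ ≤ ‖x‖ * (‖T‖ * (c * ‖x‖)) := by gcongr; exact T.le_opNorm_of_le hy
    _ = ‖T‖ * c * ‖x‖ ^ 2 := by ring

/-- Right-hand side of the disturbance-free error dynamics of the delayed extended state observer,
as a function of the errors `x = e(t)`, `y = e(t - h)` and `z = e(t - 2h)`; the operators `C₃`,
`D₄`, `D₅` stand for the products `L C̄₃`, `L D₄`, `L D₅` with the observer gain `L`. -/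
noncomputable def delayedErrorField (M D₂ C₃ D₄ D₅ : E →L[ℝ] E) (h : ℝ) (x y z : E) : E :=
  M x + (1 / h) • D₂ (x - y) + C₃ y + (1 / h) • D₄ y - (1 / (2 * h)) • D₅ (x + z)

/-- The constant `c₉` of the paper: what remains of the Lyapunov dissipation rate `q` of the
undelayed dynamics when the delayed errors are at most `c` times the current one. -/
noncomputable def delayedDissipationRate (P D₂ C₃ D₄ D₅ : E →L[ℝ] E) (h q c : ℝ) : ℝ :=
  q - ‖(2 : ℝ) • (P * C₃)‖ * c
    - (‖(2 : ℝ) • (P * D₂)‖ + ‖P * D₅‖ + (‖(2 : ℝ) • (P * D₂)‖ + ‖(2 : ℝ) • (P * D₄)‖) * c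
        + ‖P * D₅‖ * c) / h

variable {P M D₂ C₃ D₄ D₅ : E →L[ℝ] E}

theorem two_mul_inner_apply_delayedErrorField (h : ℝ) (x y z : E) :
    2 * ⟪x, P (delayedErrorField M D₂ C₃ D₄ D₅ h x y z)⟫_ℝ =
      2 * ⟪x, P (M x)⟫_ℝ + ⟪x, ((2 : ℝ) • (P * C₃)) y⟫_ℝ
        + (⟪x, ((2 : ℝ) • (P * D₂)) x⟫_ℝ - ⟪x, ((2 : ℝ) • (P * D₂)) y⟫_ℝ
          + ⟪x, ((2 : ℝ) • (P * D₄)) y⟫_ℝ - ⟪x, (P * D₅) x⟫_ℝ - ⟪x, (P * D₅) z⟫_ℝ) / h := by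
  simp only [delayedErrorField, map_add, map_sub, map_smul, inner_add_right, inner_sub_right,
    real_inner_smul_right, _root_.smul_apply, mul_apply_eq_comp]
  ring

theorem two_mul_inner_apply_delayedErrorField_le {h q c : ℝ} {x y z : E} (hh : 0 < h)
    (hM : 2 * ⟪x, P (M x)⟫_ℝ ≤ -q * ‖x‖ ^ 2) (hy : ‖y‖ ≤ c * ‖x‖) (hz : ‖z‖ ≤ c * ‖x‖) :
    2 * ⟪x, P (delayedErrorField M D₂ C₃ D₄ D₅ h x y z)⟫_ℝ ≤
      -delayedDissipationRate P D₂ C₃ D₄ D₅ h q c * ‖x‖ ^ 2 := by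
  have hx : ‖x‖ ≤ 1 * ‖x‖ := (one_mul _).ge
  have hC₃y := abs_le.1 (abs_inner_apply_le_of_norm_le ((2 : ℝ) • (P * C₃)) hy)
  have hD₂x := abs_le.1 (abs_inner_apply_le_of_norm_le ((2 : ℝ) • (P * D₂)) hx)
  have hD₂y := abs_le.1 (abs_inner_apply_le_of_norm_le ((2 : ℝ) • (P * D₂)) hy)
  have hD₄y := abs_le.1 (abs_inner_apply_le_of_norm_le ((2 : ℝ) • (P * D₄)) hy)
  have hD₅x := abs_le.1 (abs_inner_apply_le_of_norm_le (P * D₅) hx)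
  have hD₅z := abs_le.1 (abs_inner_apply_le_of_norm_le (P * D₅) hz)
  have hdifference : (⟪x, ((2 : ℝ) • (P * D₂)) x⟫_ℝ - ⟪x, ((2 : ℝ) • (P * D₂)) y⟫_ℝ
      + ⟪x, ((2 : ℝ) • (P * D₄)) y⟫_ℝ - ⟪x, (P * D₅) x⟫_ℝ - ⟪x, (P * D₅) z⟫_ℝ) / h ≤
      (‖(2 : ℝ) • (P * D₂)‖ + ‖P * D₅‖ + (‖(2 : ℝ) • (P * D₂)‖ + ‖(2 : ℝ) • (P * D₄)‖) * c
        + ‖P * D₅‖ * c) * ‖x‖ ^ 2 / h := by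
    gcongr
    linarith
  rw [two_mul_inner_apply_delayedErrorField, delayedDissipationRate]
  rw [mul_div_right_comm] at hdifference
  linarith

theorem delayed_observer_exponential_convergence_general {h κ α β q : ℝ}
    (hh : 0 < h) (hκ : 0 ≤ κ) (hα : 0 < α) (hβ : 0 < β)
    (hP : (P : E →ₗ[ℝ] E).IsSymmetric)
    (hlower : ∀ x, α * ‖x‖ ^ 2 ≤ ⟪x, P x⟫_ℝ) (hupper : ∀ x, ⟪x, P x⟫_ℝ ≤ β * ‖x‖ ^ 2)
    (hLyap : ∀ x, 2 * ⟪x, P (M x)⟫_ℝ ≤ -q * ‖x‖ ^ 2)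
    (hrate : 0 ≤ delayedDissipationRate P D₂ C₃ D₄ D₅ h q √(κ * β / α))
    {e : ℝ → E} (hcont : ContinuousOn e (Set.Ici 0))
    (hode : ∀ t, 0 ≤ t → HasDerivWithinAt e
      (delayedErrorField M D₂ C₃ D₄ D₅ h (e t) (e (t - h)) (e (t - 2 * h))) (Set.Ici t) t)
    (hRazumikhin : ∀ t, 0 ≤ t → ∀ τ ∈ ({h, 2 * h} : Set ℝ),
      ⟪e (t - τ), P (e (t - τ))⟫_ℝ ≤ κ * ⟪e t, P (e t)⟫_ℝ) {t : ℝ} (ht : 0 ≤ t) :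
    ‖e t‖ ≤ √(β / α) * ‖e 0‖ *
      Real.exp (-delayedDissipationRate P D₂ C₃ D₄ D₅ h q √(κ * β / α) * t / (2 * β)) := by
  have hdelay : ∀ s, 0 ≤ s → ∀ τ ∈ ({h, 2 * h} : Set ℝ),
      ‖e (s - τ)‖ ≤ √(κ * β / α) * ‖e s‖ := fun s hs τ hτ =>
    norm_le_sqrt_mul_norm_of_le_mul (V := fun x => ⟪x, P x⟫_ℝ) hα hκ (hlower _) (hupper _)
      (hRazumikhin s hs τ hτ)
  exact norm_le_mul_exp_of_lyapunov (V := fun x => ⟪x, P x⟫_ℝ) hα hβ hrate hlower hupper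
    (hcont.inner (P.continuous.comp_continuousOn hcont))
    (fun s hs => hasDerivWithinAt_inner_apply_self hP (hode s hs))
    (fun s hs => two_mul_inner_apply_delayedErrorField_le hh (hLyap _)
      (hdelay s hs h (by simp)) (hdelay s hs (2 * h) (by simp))) ht

end DelayedErrorDynamics

section HermitianMatrix

variable {𝕜 n : Type*} [RCLike 𝕜] [Fintype n] [DecidableEq n]

theorem re_inner_toEuclideanCLM_self_eq_sum {A : Matrix n n 𝕜} (hA : A.IsHermitian)
    (x : EuclideanSpace 𝕜 n) :
    RCLike.re ⟪x, toEuclideanCLM (𝕜 := 𝕜) A x⟫_𝕜 =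
      ∑ i, hA.eigenvalues i * ‖⟪hA.eigenvectorBasis i, x⟫_𝕜‖ ^ 2 := by
  have heigen : ∀ i, toEuclideanCLM (𝕜 := 𝕜) A (hA.eigenvectorBasis i) =
      hA.eigenvalues i • hA.eigenvectorBasis i := fun i =>
    WithLp.ofLp_injective 2 (hA.mulVec_eigenvectorBasis i)
  have hcoord : ∀ i, ⟪hA.eigenvectorBasis i, toEuclideanCLM (𝕜 := 𝕜) A x⟫_𝕜 =
      hA.eigenvalues i * ⟪hA.eigenvectorBasis i, x⟫_𝕜 := fun i => by
    rw [← isSymmetric_toEuclideanLin_iff.2 hA |>.apply_clm, heigen,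
      RCLike.real_smul_eq_coe_smul (K := 𝕜), inner_smul_left, RCLike.conj_ofReal]
  rw [← hA.eigenvectorBasis.sum_inner_mul_inner, map_sum]
  refine Finset.sum_congr rfl fun i _ => ?_
  rw [hcoord, mul_left_comm, RCLike.re_ofReal_mul, inner_mul_symm_re_eq_norm, norm_mul,
    norm_inner_symm, sq]

theorem iInf_eigenvalues_mul_norm_sq_le {A : Matrix n n 𝕜} (hA : A.IsHermitian)
    (x : EuclideanSpace 𝕜 n) :
    (⨅ i, hA.eigenvalues i) * ‖x‖ ^ 2 ≤ RCLike.re ⟪x, toEuclideanCLM (𝕜 := 𝕜) A x⟫_𝕜 := by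
  rw [re_inner_toEuclideanCLM_self_eq_sum hA, ← hA.eigenvectorBasis.sum_sq_norm_inner_right x,
    Finset.mul_sum]
  gcongr with i
  exact ciInf_le (Set.finite_range _).bddBelow i

theorem re_inner_toEuclideanCLM_self_le_iSup_eigenvalues {A : Matrix n n 𝕜} (hA : A.IsHermitian)
    (x : EuclideanSpace 𝕜 n) :
    RCLike.re ⟪x, toEuclideanCLM (𝕜 := 𝕜) A x⟫_𝕜 ≤ (⨆ i, hA.eigenvalues i) * ‖x‖ ^ 2 := by
  rw [re_inner_toEuclideanCLM_self_eq_sum hA, ← hA.eigenvectorBasis.sum_sq_norm_inner_right x,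
    Finset.mul_sum]
  gcongr with i
  exact le_ciSup (Set.finite_range _).bddAbove i

open scoped ComplexOrder in
theorem iInf_eigenvalues_pos [Nonempty n] {A : Matrix n n 𝕜} (hA : A.PosDef) :
    0 < ⨅ i, hA.1.eigenvalues i := by
  obtain ⟨i, hi⟩ := exists_eq_ciInf_of_finite (f := hA.1.eigenvalues)
  exact hi ▸ hA.eigenvalues_pos i

open scoped ComplexOrder in
theorem iSup_eigenvalues_pos [Nonempty n] {A : Matrix n n 𝕜} (hA : A.PosDef) :
    0 < ⨆ i, hA.1.eigenvalues i :=
  (iInf_eigenvalues_pos hA).trans_le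
    (ciInf_le_ciSup (Set.finite_range _).bddBelow (Set.finite_range _).bddAbove)

theorem two_mul_inner_toEuclideanCLM_le_of_lyapunov_equation {M P Q : Matrix n n ℝ}
    (hP : P.IsSymm) (hQ : Q.IsHermitian) (hLyap : Mᵀ * P + P * M = -Q) (x : EuclideanSpace ℝ n) :
    2 * ⟪x, toEuclideanCLM (𝕜 := ℝ) P (toEuclideanCLM (𝕜 := ℝ) M x)⟫_ℝ ≤
      -(⨅ i, hQ.eigenvalues i) * ‖x‖ ^ 2 := by
  have htranspose : x ⬝ᵥ (Mᵀ * P) *ᵥ x = x ⬝ᵥ (P * M) *ᵥ x := by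
    rw [← hP.eq, ← transpose_mul, hP.eq, mulVec_transpose, dotProduct_comm, dotProduct_mulVec]
  have hform : 2 * (x ⬝ᵥ (P * M) *ᵥ x) = -(x ⬝ᵥ Q *ᵥ x) := by
    rw [← dotProduct_neg, ← neg_mulVec, ← hLyap, add_mulVec, dotProduct_add, htranspose, two_mul]
  rw [inner_toEuclideanCLM, ofLp_toEuclideanCLM, mulVec_mulVec, hform, neg_mul, neg_le_neg_iff,
    ← inner_toEuclideanCLM]
  exact iInf_eigenvalues_mul_norm_sq_le hQ x

end HermitianMatrix

theorem delayedDissipationRate_toEuclideanCLM {N : ℕ} (P D₂ C₃ D₄ D₅ : Matrix (Fin N) (Fin N) ℝ)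
    (h q c : ℝ) :
    delayedDissipationRate (toEuclideanCLM (𝕜 := ℝ) P) (toEuclideanCLM (𝕜 := ℝ) D₂)
        (toEuclideanCLM (𝕜 := ℝ) C₃) (toEuclideanCLM (𝕜 := ℝ) D₄) (toEuclideanCLM (𝕜 := ℝ) D₅)
        h q c =
      q - l2OpNorm ((2 : ℝ) • (P * C₃)) * c
        - (l2OpNorm ((2 : ℝ) • (P * D₂)) + l2OpNorm (P * D₅)
            + (l2OpNorm ((2 : ℝ) • (P * D₂)) + l2OpNorm ((2 : ℝ) • (P * D₄))) * c
            + l2OpNorm (P * D₅) * c) / h := by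
  simp only [delayedDissipationRate, l2OpNorm, map_smul, map_mul]

/-- Theorem 1 (disturbance-free case): under the Lyapunov equation `MᵀP + PM = -Q`, the
Razumikhin condition and positivity of the dissipation rate `c₉`, the delayed observer
error decays exponentially. -/
theorem delayed_observer_exponential_convergence
    (N : ℕ) (hN : 1 ≤ N) (h : ℝ) (hh : 0 < h) (κ : ℝ) (hκ : 1 < κ)
    (M D2 LC3 LD4 LD5 P Q : Matrix (Fin N) (Fin N) ℝ)
    (hPsymm : P.IsSymm) (hQsymm : Q.IsSymm)
    (hP : P.PosDef) (hQ : Q.PosDef)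
    (hLyap : Mᵀ * P + P * M = -Q)
    (lminP lmaxP lminQ c₈ c₉ : ℝ)
    (hlminP : lminP = ⨅ i, hP.1.eigenvalues i)
    (hlmaxP : lmaxP = ⨆ i, hP.1.eigenvalues i)
    (hlminQ : lminQ = ⨅ i, hQ.1.eigenvalues i)
    (hc₈ : c₈ = Real.sqrt (κ * lmaxP / lminP))
    (hc₉ : c₉ = lminQ - l2OpNorm ((2 : ℝ) • (P * LC3)) * c₈
      - (l2OpNorm ((2 : ℝ) • (P * D2)) + l2OpNorm (P * LD5)
          + (l2OpNorm ((2 : ℝ) • (P * D2)) + l2OpNorm ((2 : ℝ) • (P * LD4))) * c₈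
          + l2OpNorm (P * LD5) * c₈) / h)
    (hc₉pos : 0 < c₉)
    (e : ℝ → EuclideanSpace ℝ (Fin N)) (he : Differentiable ℝ e)
    (hode : ∀ t : ℝ, 0 ≤ t →
      deriv e t = Matrix.toEuclideanLin M (e t)
        + (1 / h) • Matrix.toEuclideanLin D2 (e t - e (t - h))
        + Matrix.toEuclideanLin LC3 (e (t - h))
        + (1 / h) • Matrix.toEuclideanLin LD4 (e (t - h))
        - (1 / (2 * h)) • Matrix.toEuclideanLin LD5 (e t + e (t - 2 * h)))
    (hRazumikhin : ∀ t : ℝ, 0 ≤ t → ∀ θ ∈ Set.Icc (-(2 * h)) (0 : ℝ),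
      e (t + θ) ⬝ᵥ (P *ᵥ e (t + θ)) ≤ κ * (e t ⬝ᵥ (P *ᵥ e t))) :
    ∀ t : ℝ, 0 ≤ t →
      ‖e t‖ ≤ Real.sqrt (lmaxP / lminP) * ‖e 0‖ * Real.exp (-c₉ * t / (2 * lmaxP)) := by
  have : Nonempty (Fin N) := ⟨⟨0, hN⟩⟩
  rw [← delayedDissipationRate_toEuclideanCLM] at hc₉
  subst hlminP hlmaxP hlminQ hc₈ hc₉
  refine fun t ht => delayed_observer_exponential_convergence_general hh (by linarith)
    (iInf_eigenvalues_pos hP) (iSup_eigenvalues_pos hP) (isSymmetric_toEuclideanLin_iff.2 hP.1)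
    (iInf_eigenvalues_mul_norm_sq_le hP.1) (re_inner_toEuclideanCLM_self_le_iSup_eigenvalues hP.1)
    (two_mul_inner_toEuclideanCLM_le_of_lyapunov_equation hPsymm hQ.1 hLyap) hc₉pos.le
    he.continuous.continuousOn
    (fun s hs => (he s).hasDerivAt.hasDerivWithinAt.congr_deriv (hode s hs))
    (fun s hs τ hτ => ?_) ht
  have hτmem : -τ ∈ Set.Icc (-(2 * h)) (0 : ℝ) := by
    rcases hτ with rfl | rfl <;> constructor <;> linarith
  simpa only [inner_toEuclideanCLM, sub_eq_add_neg] using hRazumikhin s hs (-τ) hτmem
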